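/- K(π,1) arrangements have no gap in the consistency filtration. Precisely: let α_1,…,α_n be nonzero linear forms on ℝ^ℓ with ⋂_{i=1}^n ker α_i = {0}. If the complexified complement M(A) is aspherical, i.e., π_k(M(A), x_0) is trivial for all k ≥ 2, then Σ_2 = Σ_3 = ⋯ = Σ_ℓ, where Σ_m is the set of sign vectors ε ∈ {+1,−1}^n such that h(ε) is consistent at every X ∈ L(A) with codim X ≤ m. -/

import Mathlib

noncomputable section

/-- Real vector space `ℝ^ℓ`. -/
abbrev Vsp (ℓ : ℕ) : Type := EuclideanSpace ℝ (Fin ℓ)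

/-- The intersection `X = ⋂ i ∈ I, ker (α i)` as a submodule. -/
def interKer {ℓ n : ℕ} (α : Fin n → (Vsp ℓ →ₗ[ℝ] ℝ)) (I : Finset (Fin n)) :
    Submodule ℝ (Vsp ℓ) :=
  ⨅ i ∈ I, LinearMap.ker (α i)

/-- The system of half-spaces determined by `ε` is consistent at the intersection
`X = ⋂ i ∈ I, ker (α i)`: the intersection of the half-spaces of all hyperplanes
containing `X` is nonempty. -/
def ConsistentAt {ℓ n : ℕ} (α : Fin n → (Vsp ℓ →ₗ[ℝ] ℝ)) (ε : Fin n → ℝ)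
    (I : Finset (Fin n)) : Prop :=
  {x : Vsp ℓ | ∀ j : Fin n, interKer α I ≤ LinearMap.ker (α j) →
      0 < ε j * α j x}.Nonempty

/-- `Σ_m`: the set of sign vectors whose system of half-spaces is consistent at every
intersection of codimension at most `m`. -/
def SigmaFilt {n : ℕ} (ℓ : ℕ) (α : Fin n → (Vsp ℓ →ₗ[ℝ] ℝ)) (m : ℕ) :
    Set (Fin n → ℝ) :=
  {ε | (∀ i, ε i = 1 ∨ ε i = -1) ∧ ∀ I : Finset (Fin n),
    ℓ - Module.finrank ℝ (interKer α I) ≤ m → ConsistentAt α ε I}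

/-- The point `x + √-1 · v` of `ℂ^ℓ` determined by the real vectors `x, v`. -/
def cplx {ℓ : ℕ} (x v : Vsp ℓ) : Fin ℓ → ℂ :=
  fun j => (x j : ℂ) + Complex.I * (v j : ℂ)

/-- The `ℂ`-linear extension of a real linear form, evaluated at `z ∈ ℂ^ℓ`. -/
def cLin {ℓ : ℕ} (α : Vsp ℓ →ₗ[ℝ] ℝ) (z : Fin ℓ → ℂ) : ℂ :=
  (α (WithLp.toLp 2 (fun j => (z j).re)) : ℂ) + Complex.I * (α (WithLp.toLp 2 (fun j => (z j).im)) : ℂ)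

/-- The complexified complement `M(A) ⊆ ℂ^ℓ`. -/
def MA {ℓ n : ℕ} (α : Fin n → (Vsp ℓ →ₗ[ℝ] ℝ)) : Set (Fin ℓ → ℂ) :=
  {z | ∀ i, cLin (α i) z ≠ 0}



section DegreePart
open MeasureTheory Metric Set

set_option linter.unusedSectionVars false
variable {E : Type*} [NormedAddCommGroup E] [InnerProductSpace ℝ E] [FiniteDimensional ℝ E]

/-- Lagrange interpolation of `t ↦ det (1 + t A)`. -/
lemma aux_det_interp (v : ℕ → ℝ) (hv : Function.Injective v) :
    ∃ c : ℕ → ℝ, (∑ i ∈ Finset.range (Module.finrank ℝ E + 1), c i = 1) ∧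
      ∀ A : E →L[ℝ] E, (1 + A).det =
        ∑ i ∈ Finset.range (Module.finrank ℝ E + 1), c i * (1 + v i • A).det := by
  classical
  set s := Finset.range (Module.finrank ℝ E + 1) with hs
  refine ⟨fun i => (Lagrange.basis s v i).eval 1, ?_, ?_⟩
  · have := Lagrange.sum_basis (s := s) (v := v) hv.injOn ⟨0, by simp [hs]⟩
    have h2 := congrArg (Polynomial.eval 1) this
    simpa [Polynomial.eval_finsetSum] using h2
  · intro A
    let b := Module.finBasis ℝ E
    let M := LinearMap.toMatrix b b (A : E →ₗ[ℝ] E)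
    let P : Polynomial ℝ := ((Polynomial.X : Polynomial ℝ) • M.map Polynomial.C + (1 : Matrix (Fin (Module.finrank ℝ E)) (Fin (Module.finrank ℝ E)) ℝ).map Polynomial.C).det
    have hP : ∀ t : ℝ, P.eval t = (1 + t • A).det := by
      intro t
      have h1 : (1 + t • A).det = (LinearMap.toMatrix b b ((1 + t • A : E →L[ℝ] E) : E →ₗ[ℝ] E)).det := by
        rw [LinearMap.det_toMatrix]
      have h2 : (LinearMap.toMatrix b b ((1 + t • A : E →L[ℝ] E) : E →ₗ[ℝ] E)) = t • M + 1 := by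
        have : ((1 + t • A : E →L[ℝ] E) : E →ₗ[ℝ] E) = LinearMap.id + t • (A : E →ₗ[ℝ] E) := by
          ext x; simp
        rw [this, map_add, LinearMap.toMatrix_id, map_smul, add_comm]
      rw [h1, h2]
      simp only [P]
      rw [← Polynomial.coe_evalRingHom, RingHom.map_det]
      congr 1
      ext i j
      simp only [RingHom.mapMatrix_apply, Matrix.map_apply, Matrix.add_apply, Matrix.smul_apply,
        Matrix.one_apply, smul_eq_mul, Polynomial.coe_evalRingHom, Polynomial.eval_add,
        Polynomial.eval_mul, Polynomial.eval_X, Polynomial.eval_C]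
    have hdeg : P.degree < (s.card : ℕ) := by
      have h := Polynomial.natDegree_det_X_add_C_le M (1 : Matrix (Fin (Module.finrank ℝ E)) (Fin (Module.finrank ℝ E)) ℝ)
      simp only [Fintype.card_fin] at h
      refine lt_of_le_of_lt Polynomial.degree_le_natDegree ?_
      simp only [hs, Finset.card_range]
      exact_mod_cast Nat.lt_succ_of_le h
    have h := Lagrange.eq_interpolate (s := s) (v := v) (f := P) hv.injOn hdeg
    have h1 := congrArg (Polynomial.eval 1) h
    rw [Lagrange.interpolate_apply, Polynomial.eval_finsetSum] at h1
    have h3 := hP 1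
    rw [one_smul] at h3
    rw [← h3, h1]
    refine Finset.sum_congr rfl fun i _ => ?_
    rw [Polynomial.eval_mul, Polynomial.eval_C, hP, mul_comm]

lemma aux_det_pos (A : E →L[ℝ] E) {C t : ℝ} (hA : ‖A‖ ≤ C) (ht : 0 ≤ t) (h : t * C < 1) :
    0 < (1 + t • A).det := by
  have hC : 0 ≤ C := (norm_nonneg _).trans hA
  have hne : ∀ s ∈ Icc (0:ℝ) t, (1 + s • A).det ≠ 0 := by
    intro s hs h0
    have : ¬ IsUnit ((1 + s • A : E →L[ℝ] E) : E →ₗ[ℝ] E) := by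
      rw [LinearMap.isUnit_iff_isUnit_det]
      change ¬ IsUnit (1 + s • A).det
      simp [h0]
    apply this
    rw [LinearMap.isUnit_iff_ker_eq_bot, LinearMap.ker_eq_bot']
    intro x hx
    have hx' : x = -(s • A x) := by
      have : x + s • A x = 0 := by simpa using hx
      exact eq_neg_of_add_eq_zero_left this
    have h1 : ‖x‖ ≤ (t * C) * ‖x‖ := by
      calc ‖x‖ = ‖s • A x‖ := by conv_lhs => rw [hx', norm_neg]
        _ = s * ‖A x‖ := by rw [norm_smul, Real.norm_of_nonneg hs.1]
        _ ≤ t * (C * ‖x‖) := by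
          apply mul_le_mul hs.2 _ (norm_nonneg _) ht
          exact (A.le_opNorm x).trans (by gcongr)
        _ = _ := by ring
    have : ‖x‖ = 0 := by nlinarith [norm_nonneg x]
    simpa using this
  have hcont : Continuous fun s : ℝ => (1 + s • A).det :=
    ContinuousLinearMap.continuous_det.comp (by fun_prop)
  by_contra hneg
  push Not at hneg
  have h0 : (0:ℝ) ∈ Icc ((1 + t • A).det) ((1 + (0:ℝ) • A).det) := by
    refine ⟨hneg, ?_⟩
    have : (1 + (0:ℝ) • A).det = 1 := by
      simp [ContinuousLinearMap.det]
    rw [this]; norm_num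
  obtain ⟨s, hs, hs0⟩ := intermediate_value_Icc' ht hcont.continuousOn h0
  exact hne s hs hs0

lemma aux_lip {g : E → E} {ρ : ℝ} {C : NNReal} (hg : LipschitzOnWith C g (closedBall 0 ρ))
    (h0 : ∀ x, ‖x‖ = ρ → g x = 0) {g' : E → E} (h1 : ∀ x, ‖x‖ < ρ → g' x = g x)
    (h2 : ∀ x, ¬ ‖x‖ < ρ → g' x = 0) : LipschitzWith C g' := by
  apply LipschitzWith.of_dist_le_mul
  have key : ∀ x y : E, ‖x‖ < ρ → ¬ ‖y‖ < ρ → dist (g x) 0 ≤ C * dist x y := by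
    intro x y hx hy
    push Not at hy
    have hc : Continuous fun s : ℝ => ‖x + s • (y - x)‖ := by fun_prop
    obtain ⟨s, hs, hs0⟩ := intermediate_value_Icc (zero_le_one (α := ℝ)) hc.continuousOn
      (show ρ ∈ Icc _ _ from ⟨by simpa using hx.le, by simpa using hy⟩)
    simp only at hs0
    have := hg.dist_le_mul x (by simpa using hx.le) (x + s • (y - x)) (by simp [hs0])
    rw [h0 _ hs0] at this
    refine this.trans ?_
    gcongr
    rw [dist_eq_norm, dist_eq_norm]
    have : x - (x + s • (y - x)) = s • (x - y) := by module
    rw [this, norm_smul, Real.norm_of_nonneg hs.1]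
    exact mul_le_of_le_one_left (norm_nonneg _) hs.2
  intro x y
  by_cases hx : ‖x‖ < ρ <;> by_cases hy : ‖y‖ < ρ
  · rw [h1 x hx, h1 y hy]
    exact hg.dist_le_mul x (by simpa using hx.le) y (by simpa using hy.le)
  · rw [h1 x hx, h2 y hy]; exact key x y hx hy
  · rw [h2 x hx, h1 y hy]; rw [dist_comm, dist_comm x y]; exact key y x hy hx
  · rw [h2 x hx, h2 y hy, dist_self]; positivity

lemma aux_bij {g : E → E} {ρ t : ℝ} {C : NNReal} (hg : LipschitzWith C g)
    (h0 : ∀ x, ¬ ‖x‖ < ρ → g x = 0) (ht : 0 ≤ t) (htC : t * C < 1) :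
    Function.Injective (fun x => x + t • g x) ∧ (fun x => x + t • g x) '' ball 0 ρ = ball 0 ρ := by
  have happ : ApproximatesLinearOn (fun x => x + t • g x)
      ((ContinuousLinearEquiv.refl ℝ E : E ≃L[ℝ] E) : E →L[ℝ] E) univ (t.toNNReal * C) := by
    intro x _ y _
    have : (x + t • g x) - (y + t • g y) - ((ContinuousLinearEquiv.refl ℝ E : E ≃L[ℝ] E) : E →L[ℝ] E) (x - y)
        = t • (g x - g y) := by simp; module
    rw [this, norm_smul, Real.norm_of_nonneg ht]
    have h2 := hg.dist_le_mul x y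
    rw [dist_eq_norm, dist_eq_norm] at h2
    push_cast
    rw [Real.coe_toNNReal _ ht, mul_assoc]
    gcongr
  have hlt : Subsingleton E ∨ t.toNNReal * C < ‖((ContinuousLinearEquiv.refl ℝ E).symm : E →L[ℝ] E)‖₊⁻¹ := by
    rcases subsingleton_or_nontrivial E with h | h
    · exact Or.inl h
    · right
      have : ‖((ContinuousLinearEquiv.refl ℝ E).symm : E →L[ℝ] E)‖₊ = 1 := by
        have h3 : ((ContinuousLinearEquiv.refl ℝ E).symm : E →L[ℝ] E) = ContinuousLinearMap.id ℝ E := by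
          ext; simp
        rw [h3]; exact ContinuousLinearMap.nnnorm_id
      rw [this, inv_one, ← NNReal.coe_lt_coe]
      push_cast
      rwa [Real.coe_toNNReal _ ht]
  have hinj : Function.Injective (fun x => x + t • g x) := by
    have := happ.injective hlt
    intro x y hxy
    exact congrArg Subtype.val (@this ⟨x, trivial⟩ ⟨y, trivial⟩ hxy)
  have hsurj := happ.surjective hlt
  refine ⟨hinj, ?_⟩
  have hfix : ∀ x, ¬ ‖x‖ < ρ → x + t • g x = x := fun x hx => by simp [h0 x hx]
  ext y
  simp only [mem_image, mem_ball_zero_iff]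
  constructor
  · rintro ⟨x, hx, rfl⟩
    by_contra hy
    have : x + t • g x = x := hinj (hfix _ hy)
    rw [this] at hy
    exact hy hx
  · intro hy
    obtain ⟨x, hx⟩ := hsurj y
    refine ⟨x, ?_, hx⟩
    by_contra hx'
    simp only [hfix x hx'] at hx
    rw [hx] at hx'
    exact hx' hy

/-- No smooth retraction. -/
lemma aux_noretract {f : E → E} {ρ : ℝ} (hρ : 0 < ρ) (hf : ContDiff ℝ 1 f)
    (hid : ∀ x, ‖x‖ = ρ → f x = x) (hn : ∀ x, ‖f x‖ = ρ) : False := by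
  classical
  let _ : MeasurableSpace E := borel E
  have _ : BorelSpace E := ⟨rfl⟩
  let μ : Measure E := volume
  let g0 : E → E := fun x => f x - x
  have hg0 : ContDiff ℝ 1 g0 := hf.sub contDiff_id
  have hdc : Continuous (fderiv ℝ g0) := hg0.continuous_fderiv one_ne_zero
  obtain ⟨C, hC⟩ := (isCompact_closedBall (0:E) ρ).exists_bound_of_continuousOn hdc.continuousOn
  have hC0 : 0 ≤ C := (norm_nonneg _).trans (hC 0 (by simp [hρ.le]))
  lift C to NNReal using hC0
  have hlip : LipschitzOnWith C g0 (closedBall 0 ρ) :=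
    Convex.lipschitzOnWith_of_nnnorm_fderiv_le (𝕜 := ℝ)
      (fun x _ => hg0.differentiable one_ne_zero x) (fun x hx => by exact_mod_cast hC x hx)
      (convex_closedBall 0 ρ)
  set g : E → E := fun x => if ‖x‖ < ρ then g0 x else 0 with hg
  have hgo : ∀ x, ¬ ‖x‖ < ρ → g x = 0 := fun x hx => if_neg hx
  have hlip2 : LipschitzWith C g := aux_lip hlip (fun x hx => by simp [g0, hid x hx])
    (fun x hx => if_pos hx) hgo
  have hIntg : ∀ t : ℝ, 0 ≤ t → t * C < 1 →
      ∫ x in ball (0:E) ρ, (1 + t • fderiv ℝ g0 x).det ∂μ = μ.real (ball 0 ρ) := by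
    intro t ht htC
    obtain ⟨hinj, himg⟩ := aux_bij (ρ := ρ) hlip2 hgo ht htC
    have hder : ∀ x ∈ ball (0:E) ρ, HasFDerivWithinAt (fun x => x + t • g x)
        (1 + t • fderiv ℝ g0 x) (ball 0 ρ) x := by
      intro x hx
      have h1 : HasFDerivAt (fun x => x + t • g0 x) (1 + t • fderiv ℝ g0 x) x :=
        (hasFDerivAt_id x).add ((hg0.differentiable one_ne_zero x).hasFDerivAt.const_smul t)
      refine h1.hasFDerivWithinAt.congr ?_ ?_
      · intro y hy
        simp [hg, mem_ball_zero_iff.1 hy]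
      · simp [hg, mem_ball_zero_iff.1 hx]
    have h := integral_image_eq_integral_abs_det_fderiv_smul μ (measurableSet_ball) hder
      hinj.injOn (fun _ => (1:ℝ))
    rw [himg] at h
    simp only [smul_eq_mul, mul_one, integral_const, MeasurableSet.univ, measureReal_restrict_apply,
      univ_inter] at h
    rw [h]
    refine setIntegral_congr_fun measurableSet_ball fun x hx => ?_
    exact (abs_of_pos (aux_det_pos _ (hC x (ball_subset_closedBall hx)) ht htC)).symm
  -- interpolation nodes
  let v : ℕ → ℝ := fun i => 1 / ((i + 1 : ℝ) * (C + 1))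
  have hCp : (0:ℝ) < C + 1 := by positivity
  have hv : Function.Injective v := by
    intro i j hij
    simp only [v] at hij
    have hi : (0:ℝ) < (i + 1 : ℝ) * (C + 1) := by positivity
    have hj : (0:ℝ) < (j + 1 : ℝ) * (C + 1) := by positivity
    rw [one_div, one_div, inv_inj] at hij
    have := mul_right_cancel₀ hCp.ne' hij
    exact_mod_cast (add_right_cancel this)
  have hv0 : ∀ i, 0 ≤ v i := fun i => by positivity
  have hv1 : ∀ i, v i * C < 1 := by
    intro i
    simp only [v]
    rw [one_div, inv_mul_lt_iff₀ (by positivity)]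
    have : (0:ℝ) ≤ i := by positivity
    have hC' : (0:ℝ) ≤ C := C.2
    nlinarith
  obtain ⟨c, hc1, hc⟩ := aux_det_interp (E := E) v hv
  have hfin : ∀ t : ℝ, IntegrableOn (fun x => (1 + t • fderiv ℝ g0 x).det) (ball (0:E) ρ) μ := by
    intro t
    have hcont : Continuous fun x => (1 + t • fderiv ℝ g0 x).det :=
      ContinuousLinearMap.continuous_det.comp (by fun_prop)
    exact (hcont.continuousOn.integrableOn_compact (isCompact_closedBall (0:E) ρ)).mono_set
      ball_subset_closedBall
  have hzero : ∀ x, (1 + fderiv ℝ g0 x).det = 0 := by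
    intro x
    have hfd : HasFDerivAt f (fderiv ℝ f x) x := (hf.differentiable one_ne_zero x).hasFDerivAt
    have h1 : 1 + fderiv ℝ g0 x = fderiv ℝ f x := by
      have : HasFDerivAt g0 (fderiv ℝ f x - ContinuousLinearMap.id ℝ E) x := hfd.sub (hasFDerivAt_id x)
      rw [this.fderiv]
      ext y; simp
    rw [h1]
    by_contra hne
    have hu : IsUnit ((fderiv ℝ f x : E →L[ℝ] E) : E →ₗ[ℝ] E) := by
      rw [LinearMap.isUnit_iff_isUnit_det]
      exact isUnit_iff_ne_zero.2 hne
    rw [LinearMap.isUnit_iff_range_eq_top, LinearMap.range_eq_top] at hu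
    obtain ⟨y, hy⟩ := hu (f x)
    have h2 := (hfd.inner ℝ hfd)
    have h3 : (fun x => inner ℝ (f x) (f x)) = fun _ => ρ ^ 2 := by
      funext z; rw [real_inner_self_eq_norm_sq, hn]
    rw [h3] at h2
    have h4 := h2.unique (hasFDerivAt_const _ _)
    have h5 := congrArg (fun L => L y) h4
    have hy' : fderiv ℝ f x y = f x := hy
    simp [hy', hn] at h5
    exact hρ.ne' h5
  have hbig : ∫ x in ball (0:E) ρ, (1 + fderiv ℝ g0 x).det ∂μ = μ.real (ball 0 ρ) := by
    have hc' : ∀ x, (1 + fderiv ℝ g0 x).det = _ := fun x => hc (fderiv ℝ g0 x)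
    rw [funext hc']
    rw [integral_finsetSum _ (fun i _ => (hfin (v i)).const_mul (c i))]
    simp_rw [integral_const_mul, hIntg _ (hv0 _) (hv1 _)]
    rw [← Finset.sum_mul, hc1, one_mul]
  simp_rw [hzero] at hbig
  simp only [integral_zero] at hbig
  have : 0 < μ.real (ball (0:E) ρ) := by
    rw [Measure.real, ENNReal.toReal_pos_iff]
    exact ⟨measure_ball_pos _ _ hρ, measure_ball_lt_top⟩
  linarith

/-- A continuous self-map of a Euclidean space equal to the identity outside a ball has a zero. -/
theorem aux_exists_zero {R : E → E} (hR : Continuous R) {ρ : ℝ} (hρ : 0 < ρ)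
    (hid : ∀ x, ρ ≤ ‖x‖ → R x = x) : ∃ x, R x = 0 := by
  by_contra hne
  push Not at hne
  obtain ⟨g, hg, hgd, hgs⟩ := Continuous.exists_contDiff_approx (f := fun x => R x - x)
    (ε := fun x => ‖R x‖) 1 (by fun_prop) (by fun_prop) (fun x => norm_pos_iff.2 (hne x))
  have hg' : ∀ x, ρ ≤ ‖x‖ → g x = 0 := by
    intro x hx
    by_contra h
    have := hgs (Function.mem_support.2 h)
    simp [hid x hx] at this
  have hT : ∀ x, x + g x ≠ 0 := by
    intro x hx
    have := hgd x
    have h2 : g x = -x := by rw [eq_neg_iff_add_eq_zero, add_comm]; exact hx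
    rw [h2, dist_eq_norm] at this
    have h3 : -x - (R x - x) = - R x := by abel
    rw [h3, norm_neg] at this
    exact lt_irrefl _ this
  have hT1 : ContDiff ℝ 1 (fun x => x + g x) := contDiff_id.add hg
  refine aux_noretract (E := E) (f := fun x => (ρ / ‖x + g x‖) • (x + g x)) hρ ?_ ?_ ?_
  · exact (contDiff_const.div (hT1.norm ℝ hT) (fun x => norm_ne_zero_iff.2 (hT x))).smul hT1
  · intro x hx
    simp [hg' x hx.ge, hx, hρ.ne']
  · intro x
    rw [norm_smul, norm_div, norm_norm, Real.norm_of_nonneg hρ.le,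
      div_mul_cancel₀ _ (norm_ne_zero_iff.2 (hT x))]

end DegreePart

section SpherePart
open Set Metric
open scoped unitInterval Topology

/-- Version of `aux_exists_zero` for an arbitrary finite dimensional normed space. -/
theorem aux_exists_zero' {F : Type*} [NormedAddCommGroup F] [NormedSpace ℝ F]
    [FiniteDimensional ℝ F] {R : F → F} (hR : Continuous R) {ρ : ℝ} (hρ : 0 < ρ)
    (hid : ∀ x, ρ ≤ ‖x‖ → R x = x) : ∃ x, R x = 0 := by
  let e : F ≃L[ℝ] EuclideanSpace ℝ (Fin (Module.finrank ℝ F)) := toEuclidean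
  have hRe : Continuous fun y => e (R (e.symm y)) := by fun_prop
  have hpos : 0 < ‖(e : F →L[ℝ] EuclideanSpace ℝ (Fin (Module.finrank ℝ F)))‖ * ρ + 1 := by positivity
  obtain ⟨y, hy⟩ := aux_exists_zero hRe hpos (by
    intro y hy
    rw [hid, e.apply_symm_apply]
    by_contra hlt
    push Not at hlt
    have h1 : ‖y‖ ≤ ‖(e : F →L[ℝ] EuclideanSpace ℝ (Fin (Module.finrank ℝ F)))‖ * ‖e.symm y‖ := by
      have := (e : F →L[ℝ] EuclideanSpace ℝ (Fin (Module.finrank ℝ F))).le_opNorm (e.symm y)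
      simpa using this
    have h2 : ‖(e : F →L[ℝ] EuclideanSpace ℝ (Fin (Module.finrank ℝ F)))‖ * ‖e.symm y‖ ≤ ‖(e : F →L[ℝ] EuclideanSpace ℝ (Fin (Module.finrank ℝ F)))‖ * ρ := by gcongr
    linarith)
  exact ⟨e.symm y, by simpa using hy⟩

/-- Coordinates in `[-1,1]^k`. -/
noncomputable def cubeSig {k : ℕ} (s : Fin k → I) : Fin k → ℝ := fun i => 2 * (s i : ℝ) - 1

/-- The cube collapsed onto the unit sphere of `‖a‖ + |b|`. -/
noncomputable def cubeQ {k : ℕ} (s : Fin k → I) : (Fin k → ℝ) × ℝ :=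
  (((2 - 2 * ‖cubeSig s‖) / max ‖cubeSig s‖ (1 - ‖cubeSig s‖)) • cubeSig s, 1 - 2 * ‖cubeSig s‖)

lemma cubeSig_continuous {k : ℕ} : Continuous (cubeSig (k := k)) := by
  unfold cubeSig; fun_prop

lemma aux_max_pos (r : ℝ) : 0 < max r (1 - r) := by
  rcases le_total r (1 - r) with h | h
  · rw [max_eq_right h]; linarith
  · rw [max_eq_left h]; linarith

lemma aux_coef {r : ℝ} (hr : r ≤ 1) : (2 - 2 * r) / max r (1 - r) * r = 1 - |1 - 2 * r| := by
  rcases le_total r (1 - r) with h | h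
  · rw [max_eq_right h, abs_of_nonneg (by linarith)]
    have : 1 - r ≠ 0 := by linarith
    field_simp; ring
  · rw [max_eq_left h, abs_of_nonpos (by linarith)]
    have : r ≠ 0 := by linarith
    field_simp; ring

lemma cubeQ_continuous {k : ℕ} : Continuous (cubeQ (k := k)) := by
  have h := cubeSig_continuous (k := k)
  have hc : Continuous fun s : Fin k → I =>
      (2 - 2 * ‖cubeSig s‖) / max ‖cubeSig s‖ (1 - ‖cubeSig s‖) :=
    Continuous.div (by fun_prop) (by fun_prop) (fun s => (aux_max_pos _).ne')
  exact (hc.smul h).prodMk (by fun_prop)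

lemma cubeSig_norm_le {k : ℕ} (s : Fin k → I) : ‖cubeSig s‖ ≤ 1 := by
  rw [pi_norm_le_iff_of_nonneg zero_le_one]
  intro i
  have h0 := (s i).2.1
  have h1 := (s i).2.2
  rw [Real.norm_eq_abs, abs_le, cubeSig]
  constructor <;> linarith

lemma cubeSig_norm_eq {k : ℕ} (s : Fin k → I) (hs : s ∈ Cube.boundary (Fin k)) :
    ‖cubeSig s‖ = 1 := by
  obtain ⟨i, hi⟩ := hs
  refine le_antisymm (cubeSig_norm_le s) ?_
  refine le_trans ?_ (norm_le_pi_norm (cubeSig s) i)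
  rcases hi with hi | hi <;> simp [cubeSig, hi]; norm_num

lemma cubeSig_boundary {k : ℕ} (s : Fin k → I) (hs : ‖cubeSig s‖ = 1) :
    s ∈ Cube.boundary (Fin k) := by
  by_contra h
  have hlt : ‖cubeSig s‖ < 1 := by
    rw [pi_norm_lt_iff zero_lt_one]
    intro i
    have h0 := (s i).2.1
    have h1 := (s i).2.2
    have hn : ¬ (s i = 0 ∨ s i = 1) := fun hh => h ⟨i, hh⟩
    push Not at hn
    have h0' : (s i : ℝ) ≠ 0 := fun hh => hn.1 (Subtype.ext hh)
    have h1' : (s i : ℝ) ≠ 1 := fun hh => hn.2 (Subtype.ext hh)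
    have h2 := lt_of_le_of_ne h0 h0'.symm
    have h3 := lt_of_le_of_ne h1 h1'
    rw [Real.norm_eq_abs, abs_lt, cubeSig]
    constructor <;> linarith
  linarith

lemma cubeQ_norm {k : ℕ} (s : Fin k → I) : ‖(cubeQ s).1‖ + |(cubeQ s).2| = 1 := by
  have h := aux_coef (cubeSig_norm_le s)
  have h1 := cubeSig_norm_le s
  have hp := aux_max_pos ‖cubeSig s‖
  have hnn : 0 ≤ (2 - 2 * ‖cubeSig s‖) / max ‖cubeSig s‖ (1 - ‖cubeSig s‖) :=
    div_nonneg (by linarith) hp.le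
  simp only [cubeQ]
  rw [norm_smul, Real.norm_of_nonneg hnn, h]; ring

lemma cubeQ_ne_zero {k : ℕ} (s : Fin k → I) : cubeQ s ≠ 0 := by
  intro h
  have := cubeQ_norm s
  simp [h] at this

lemma cubeQ_boundary {k : ℕ} (s : Fin k → I) (hs : s ∈ Cube.boundary (Fin k)) :
    cubeQ s = (0, -1) := by
  simp [cubeQ, cubeSig_norm_eq s hs]; norm_num

lemma cubeQ_inj {k : ℕ} (s s' : Fin k → I) (h : cubeQ s = cubeQ s') :
    s = s' ∨ (s ∈ Cube.boundary (Fin k) ∧ s' ∈ Cube.boundary (Fin k)) := by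
  have h2 := congrArg Prod.snd h
  have h1 := congrArg Prod.fst h
  simp only [cubeQ] at h1 h2
  have hn : ‖cubeSig s‖ = ‖cubeSig s'‖ := by linarith
  rcases eq_or_ne ‖cubeSig s‖ 1 with he | he
  · exact Or.inr ⟨cubeSig_boundary s he, cubeSig_boundary s' (hn ▸ he)⟩
  · left
    have hlt := lt_of_le_of_ne (cubeSig_norm_le s) he
    rw [← hn] at h1
    have hc : (2 - 2 * ‖cubeSig s‖) / max ‖cubeSig s‖ (1 - ‖cubeSig s‖) ≠ 0 :=
      (div_pos (by linarith) (aux_max_pos _)).ne'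
    have h3 := smul_right_injective _ hc h1
    funext i
    have h4 := congrFun h3 i
    simp only [cubeSig] at h4
    exact Subtype.ext (by linarith)

lemma cubeQ_surj {k : ℕ} (hk : 0 < k) (u : (Fin k → ℝ) × ℝ) (hu : ‖u.1‖ + |u.2| = 1) :
    ∃ s, cubeQ s = u := by
  obtain ⟨a, b⟩ := u
  simp only at hu
  have ha := norm_nonneg a
  have hb : |b| ≤ 1 := by linarith
  rw [abs_le] at hb
  rcases eq_or_lt_of_le hb.1 with h | h
  · refine ⟨fun _ => 0, ?_⟩
    rw [cubeQ_boundary _ ⟨⟨0, hk⟩, Or.inl rfl⟩]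
    have : ‖a‖ = 0 := by
      rw [← h] at hu; norm_num at hu; simp [hu]
    rw [norm_eq_zero] at this
    rw [this, ← h]
  · set r := (1 - b) / 2 with hr
    have hr0 : 0 ≤ r := by rw [hr]; linarith
    have hr1 : r < 1 := by rw [hr]; linarith
    set c := (2 - 2 * r) / max r (1 - r) with hc
    have hcp : 0 < c := div_pos (by linarith) (aux_max_pos _)
    have hcr : c * r = ‖a‖ := by
      rw [hc, aux_coef hr1.le]
      have : 1 - 2 * r = b := by rw [hr]; ring
      rw [this]; linarith
    have hna : ‖c⁻¹ • a‖ = r := by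
      rw [norm_smul, norm_inv, Real.norm_of_nonneg hcp.le, ← hcr]
      field_simp
    have hmem : ∀ i, ((c⁻¹ • a) i + 1) / 2 ∈ Icc (0:ℝ) 1 := by
      intro i
      have := (norm_le_pi_norm (c⁻¹ • a) i).trans (hna.le.trans hr1.le)
      rw [Real.norm_eq_abs, abs_le] at this
      constructor <;> linarith
    refine ⟨fun i => ⟨_, hmem i⟩, ?_⟩
    have hs : cubeSig (fun i => (⟨_, hmem i⟩ : I)) = c⁻¹ • a := by
      funext i; simp only [cubeSig]; ring
    rw [cubeQ, hs, hna, ← hc, smul_smul, mul_inv_cancel₀ hcp.ne', one_smul]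
    congr 1
    rw [hr]; ring

theorem cubeQ_essential {k : ℕ} (hk : 0 < k) (K : I × (Fin k → I) → (Fin k → ℝ) × ℝ)
    (hK : Continuous K) (h0 : ∀ s, K (0, s) = cubeQ s) (h1 : ∀ s s', K (1, s) = K (1, s'))
    (hb : ∀ t, ∀ s ∈ Cube.boundary (Fin k), ∀ s' ∈ Cube.boundary (Fin k), K (t, s) = K (t, s')) :
    ∃ z, K z = 0 := by
  let N : ((Fin k → ℝ) × ℝ) → ℝ := fun y => ‖y.1‖ + |y.2|
  have hNc : Continuous N := by fun_prop
  have hNs : ∀ (c : ℝ) (y : (Fin k → ℝ) × ℝ), 0 ≤ c → N (c • y) = c * N y := by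
    intro c y hc
    simp only [N, Prod.smul_fst, Prod.smul_snd, norm_smul, smul_eq_mul, abs_mul,
      Real.norm_of_nonneg hc, abs_of_nonneg hc]; ring
  have hN0 : ∀ y : (Fin k → ℝ) × ℝ, N y = 0 → y = 0 := by
    intro y hy
    have h1 := norm_nonneg y.1
    have h2 := abs_nonneg y.2
    have h3 : ‖y.1‖ = 0 := by simp only [N] at hy; linarith
    have h4 : |y.2| = 0 := by simp only [N] at hy; linarith
    exact Prod.ext (norm_eq_zero.1 h3) (abs_eq_zero.1 h4)
  have hNn : ∀ y : (Fin k → ℝ) × ℝ, 0 ≤ N y := fun y => by positivity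
  let B := {y : (Fin k → ℝ) × ℝ // N y ≤ 1}
  have hQm : ∀ z : I × (Fin k → I), N ((1 - (z.1 : ℝ)) • cubeQ z.2) = 1 - (z.1 : ℝ) := by
    intro z
    rw [hNs _ _ (by have := z.1.2.2; linarith)]
    have : N (cubeQ z.2) = 1 := cubeQ_norm z.2
    rw [this, mul_one]
  let Q : C(I × (Fin k → I), B) :=
    ⟨fun z => ⟨(1 - (z.1 : ℝ)) • cubeQ z.2, by rw [hQm]; have := z.1.2.1; linarith⟩, by
      have := cubeQ_continuous (k := k)
      fun_prop⟩
  have hQs : Function.Surjective Q := by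
    rintro ⟨y, hy⟩
    rcases eq_or_ne (N y) 0 with h | h
    · refine ⟨(1, fun _ => 0), Subtype.ext ?_⟩
      simp [Q, hN0 y h]
    · obtain ⟨s, hs⟩ := cubeQ_surj hk ((N y)⁻¹ • y) (by
        have := hNs (N y)⁻¹ y (inv_nonneg.2 (hNn y))
        rw [inv_mul_cancel₀ h] at this
        exact this)
      refine ⟨(⟨1 - N y, by linarith, by linarith [hNn y]⟩, s), Subtype.ext ?_⟩
      simp [Q, hs, smul_smul, h]
  have hQq : Topology.IsQuotientMap Q := Topology.IsQuotientMap.of_surjective_continuous hQs Q.continuous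
  have hfac : Function.FactorsThrough (⟨K, hK⟩ : C(I × (Fin k → I), (Fin k → ℝ) × ℝ)) Q := by
    rintro ⟨t, s⟩ ⟨t', s'⟩ h
    have h' : (1 - (t : ℝ)) • cubeQ s = (1 - (t' : ℝ)) • cubeQ s' := congrArg Subtype.val h
    have ht : t = t' := by
      have := congrArg N h'
      rw [hQm (t, s), hQm (t', s')] at this
      exact Subtype.ext (by simp only at this; linarith)
    subst ht
    change K (t, s) = K (t, s')
    by_cases ht1 : t = 1
    · rw [ht1]; exact h1 s s'
    · have hne : (1 - (t : ℝ)) ≠ 0 := by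
        intro hh; exact ht1 (Subtype.ext (by simp only [Icc.coe_one]; linarith))
      have hq := smul_right_injective _ hne h'
      rcases cubeQ_inj s s' hq with h | ⟨h, h'⟩
      · rw [h]
      · exact hb t s h s' h'
  let Rb : C(B, (Fin k → ℝ) × ℝ) := hQq.lift (⟨K, hK⟩ : C(I × (Fin k → I), (Fin k → ℝ) × ℝ)) hfac
  have hRb : ∀ z, Rb (Q z) = K z := fun z => by
    have := hQq.lift_comp (⟨K, hK⟩ : C(I × (Fin k → I), (Fin k → ℝ) × ℝ)) hfac
    exact congrArg (fun f : C(I × (Fin k → I), (Fin k → ℝ) × ℝ) => f z) this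
  have hmx : ∀ y : (Fin k → ℝ) × ℝ, 0 < max 1 (N y) := fun y => lt_of_lt_of_le one_pos (le_max_left _ _)
  let ret : ((Fin k → ℝ) × ℝ) → B := fun y => ⟨(max 1 (N y))⁻¹ • y, by
    rw [hNs _ _ (inv_nonneg.2 (hmx y).le), inv_mul_le_iff₀ (hmx y), mul_one]
    exact le_max_right _ _⟩
  have hret : Continuous ret := by
    have hinv : Continuous fun y => (max 1 (N y))⁻¹ :=
      (continuous_const.max hNc).inv₀ (fun y => (hmx y).ne')
    exact Continuous.subtype_mk (hinv.smul continuous_id) _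
  let R : ((Fin k → ℝ) × ℝ) → ((Fin k → ℝ) × ℝ) := fun y => Rb (ret y) + (y - (ret y).1)
  have hRc : Continuous R :=
    (Rb.continuous.comp hret).add (continuous_id.sub (continuous_subtype_val.comp hret))
  have hRid : ∀ y, 1 ≤ N y → R y = y := by
    intro y hy
    have hN1 : N (ret y).1 = 1 := by
      simp only [ret]
      rw [hNs _ _ (inv_nonneg.2 (hmx y).le), max_eq_right hy, inv_mul_cancel₀ (by linarith)]
    obtain ⟨s, hs⟩ := cubeQ_surj hk (ret y).1 hN1
    have : ret y = Q (0, s) := Subtype.ext (by simp [Q, hs])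
    have h2 : Rb (ret y) = (ret y).1 := by
      rw [this, hRb, h0]; simp [Q]
    simp only [R, h2]; abel
  have hRin : ∀ y, N y ≤ 1 → ∃ z, R y = K z := by
    intro y hy
    obtain ⟨z, hz⟩ := hQs (ret y)
    refine ⟨z, ?_⟩
    have : (ret y).1 = y := by simp [ret, max_eq_left hy]
    have h3 : Rb (ret y) = K z := by rw [← hz, hRb]
    simp only [R]
    rw [h3, this, sub_self, add_zero]
  obtain ⟨y, hy⟩ := aux_exists_zero' hRc one_pos (fun y hy => hRid y (by
    refine hy.trans ?_
    rw [Prod.norm_def, max_le_iff]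
    exact ⟨le_add_of_nonneg_right (abs_nonneg _), le_add_of_nonneg_left (norm_nonneg _)⟩))
  rcases le_total (N y) 1 with h | h
  · obtain ⟨z, hz⟩ := hRin y h
    exact ⟨z, by rw [← hz, hy]⟩
  · rw [hRid y h] at hy
    subst hy
    exfalso
    simp [N] at h
    linarith

end SpherePart

section AnglePart
open Set
open scoped unitInterval Topology

lemma angle_lift {A : Type} [TopologicalSpace A] [PreconnectedSpace A] (x y : I × A → ℝ)
    (hx : Continuous x) (hy : Continuous y)
    (hne : ∀ z, x z = 0 → y z ≠ 0) (h0 : ∀ a, x (0, a) = 0 → 0 < y (0, a)) (S : Set A)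
    (hSx : ∀ t, ∀ a ∈ S, ∀ a' ∈ S, x (t, a) = x (t, a'))
    (hSy : ∀ t, ∀ a ∈ S, ∀ a' ∈ S, y (t, a) = y (t, a'))
    (h1x : ∀ a a', x (1, a) = x (1, a')) (h1y : ∀ a a', y (1, a) = y (1, a')) :
    ∃ θ : I × A → ℝ, Continuous θ ∧
      (∀ z, ∃ ρ : ℝ, 0 < ρ ∧ x z = ρ * Real.cos (θ z) ∧ y z = ρ * Real.sin (θ z)) ∧
      (∀ a, -(Real.pi / 2) < θ (0, a) ∧ θ (0, a) < 3 * (Real.pi / 2)) ∧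
      (∀ t, ∀ a ∈ S, ∀ a' ∈ S, θ (t, a) = θ (t, a')) ∧
      (∀ a a', θ (1, a) = θ (1, a')) := by
  have cov := Complex.isCoveringMap_exp
  let w : I × A → ℂ := fun z => ⟨x z, y z⟩
  have hwc : Continuous w := by
    have : w = fun z => (x z : ℂ) + (y z : ℂ) * Complex.I := by
      funext z; apply Complex.ext <;> simp [w]
    rw [this]; fun_prop
  have hw : ∀ z, w z ≠ 0 := by
    intro z hz
    exact hne z (congrArg Complex.re hz) (congrArg Complex.im hz)
  let H : C(I × A, {z : ℂ // z ≠ 0}) := ⟨fun z => ⟨w z, hw z⟩, hwc.subtype_mk _⟩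
  have hslit : ∀ a, -Complex.I * w (0, a) ∈ Complex.slitPlane := by
    intro a
    rw [Complex.mem_slitPlane_iff]
    by_cases h : x (0, a) = 0
    · left; simpa [w] using h0 a h
    · right; simpa [w] using h
  let f : C(A, ℂ) := ⟨fun a => Complex.log (-Complex.I * w (0, a)) + (Real.pi / 2 : ℝ) * Complex.I, by
    have : Continuous fun a => -Complex.I * w (0, a) := by fun_prop
    exact (this.clog hslit).add continuous_const⟩
  have hexp : ∀ a, Complex.exp (f a) = w (0, a) := by
    intro a
    simp only [f, ContinuousMap.coe_mk]
    rw [Complex.exp_add, Complex.exp_log (Complex.slitPlane_ne_zero (hslit a))]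
    push_cast
    rw [Complex.exp_pi_div_two_mul_I]
    linear_combination (-w (0, a)) * Complex.I_mul_I
  have H0 : ∀ a, H (0, a) = (fun z : ℂ ↦ (⟨_, z.exp_ne_zero⟩ : {z : ℂ // z ≠ 0})) (f a) := by
    intro a; exact Subtype.ext (hexp a).symm
  let F : C(I × A, ℂ) := cov.liftHomotopy H f H0
  have hF : ∀ z, Complex.exp (F z) = w z := fun z =>
    congrArg Subtype.val (congrFun (cov.liftHomotopy_lifts H f H0) z)
  have hF0 : ∀ a, F (0, a) = f a := cov.liftHomotopy_zero H f H0
  refine ⟨fun z => (F z).im, by fun_prop, ?_, ?_, ?_, ?_⟩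
  · intro z
    refine ⟨Real.exp (F z).re, Real.exp_pos _, ?_, ?_⟩
    · rw [← Complex.exp_re, hF]
    · rw [← Complex.exp_im, hF]
  · intro a
    have him : (F (0, a)).im = Complex.arg (-Complex.I * w (0, a)) + Real.pi / 2 := by
      rw [hF0]; simp only [f, ContinuousMap.coe_mk, Complex.add_im, Complex.log_im]; simp
    have h2 := Complex.neg_pi_lt_arg (-Complex.I * w (0, a))
    have h3 := lt_of_le_of_ne (Complex.arg_le_pi (-Complex.I * w (0, a)))
      (Complex.slitPlane_arg_ne_pi (hslit a))
    change _ < (F (0, a)).im ∧ (F (0, a)).im < _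
    rw [him]
    constructor <;> linarith
  · intro t a ha a' ha'
    have hww : ∀ t, w (t, a) = w (t, a') := fun t => by
      simp only [w]; rw [hSx t a ha a' ha', hSy t a ha a' ha']
    have := cov.eq_of_comp_eq (g₁ := fun t => F (t, a)) (g₂ := fun t => F (t, a'))
      (by fun_prop) (by fun_prop) (by
        funext t; exact Subtype.ext (by simp only [Function.comp]; rw [hF, hF, hww])) 0 (by
        simp only [hF0, f, ContinuousMap.coe_mk]; rw [hww])
    exact congrArg Complex.im (congrFun this t)
  · intro a a'
    have := cov.const_of_comp (g := fun a => F (1, a)) (by fun_prop) (by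
      intro a a'; exact Subtype.ext (by
        simp only; rw [hF, hF]; simp only [w]; rw [h1x a a', h1y a a'])) a a'
    exact congrArg Complex.im this

end AnglePart

section CorePart
open Set
open scoped unitInterval Topology

theorem core_contra {k : ℕ} (hk : 0 < k) {V : Type*} [NormedAddCommGroup V] [NormedSpace ℝ V]
    {ι : Type*} [Fintype ι] [Nonempty ι] (β : ι → V →L[ℝ] ℝ) (P : V →L[ℝ] (Fin k → ℝ) × ℝ)
    (hP : ∀ u, P u = 0 → ∀ j, β j u = 0) (a b : I × (Fin k → I) → V)
    (ha : Continuous a) (hb : Continuous b)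
    (hne : ∀ z j, β j (a z) = 0 → β j (b z) ≠ 0)
    (h0 : ∀ s, P (a (0, s)) = cubeQ s)
    (hpos : ∀ s j, β j (a (0, s)) = 0 → 0 < β j (b (0, s)))
    (hmin : ∀ s, ∃ j, 0 < β j (a (0, s)))
    (hSa : ∀ t, ∀ s ∈ Cube.boundary (Fin k), ∀ s' ∈ Cube.boundary (Fin k), a (t, s) = a (t, s'))
    (hSb : ∀ t, ∀ s ∈ Cube.boundary (Fin k), ∀ s' ∈ Cube.boundary (Fin k), b (t, s) = b (t, s'))
    (h1a : ∀ s s', a (1, s) = a (1, s')) (h1b : ∀ s s', b (1, s) = b (1, s')) : False := by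
  have hθ := fun j => angle_lift (fun z => β j (a z)) (fun z => β j (b z))
    (by fun_prop) (by fun_prop) (fun z => hne z j) (fun s => hpos s j) (Cube.boundary (Fin k))
    (fun t s hs s' hs' => by rw [hSa t s hs s' hs'])
    (fun t s hs s' hs' => by rw [hSb t s hs s' hs'])
    (fun s s' => by rw [h1a s s']) (fun s s' => by rw [h1b s s'])
  choose θ hθc hθp hθ0 hθS hθ1 using hθ
  let φ : I × (Fin k → I) → ℝ := fun z => Finset.univ.inf' Finset.univ_nonempty (fun j => θ j z)
  have hφc : Continuous φ :=
    Continuous.finset_inf'_apply Finset.univ_nonempty (fun j _ => hθc j)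
  have hφS : ∀ t, ∀ s ∈ Cube.boundary (Fin k), ∀ s' ∈ Cube.boundary (Fin k),
      φ (t, s) = φ (t, s') := by
    intro t s hs s' hs'
    simp only [φ]; congr 1; funext j; exact hθS j t s hs s' hs'
  have hφ1 : ∀ s s', φ (1, s) = φ (1, s') := by
    intro s s'
    simp only [φ]; congr 1; funext j; exact hθ1 j s s'
  have hφm : ∀ z, ∃ j, φ z = θ j z := fun z => by
    obtain ⟨j, -, hj⟩ := Finset.exists_mem_eq_inf' (Finset.univ_nonempty (α := ι)) (fun j => θ j z)
    exact ⟨j, hj⟩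
  have hφ0 : ∀ s, φ (0, s) < Real.pi / 2 := by
    intro s
    obtain ⟨j, hj⟩ := hmin s
    have hle : φ (0, s) ≤ θ j (0, s) := Finset.inf'_le _ (Finset.mem_univ j)
    refine lt_of_le_of_lt hle ?_
    by_contra hcon
    push Not at hcon
    obtain ⟨ρ, hρ, h1, -⟩ := hθp j (0, s)
    have hcos := Real.cos_nonpos_of_pi_div_two_le_of_le hcon (by linarith [(hθ0 j s).2])
    rw [h1] at hj
    nlinarith
  let T : I → I := fun t => Set.projIcc 0 1 zero_le_one (2 * (t : ℝ) - 1)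
  let τ : I → I := fun t => Set.projIcc 0 1 zero_le_one (2 * (t : ℝ))
  have hTc : Continuous T := continuous_projIcc.comp (by fun_prop)
  have hτc : Continuous τ := continuous_projIcc.comp (by fun_prop)
  have hT0 : T 0 = 0 := by
    simp only [T]; exact Set.projIcc_of_le_left _ (by simp)
  have hT1 : T 1 = 1 := by
    simp only [T]; exact Set.projIcc_of_right_le _ (by norm_num)
  have hτ0 : τ 0 = 0 := by
    simp only [τ]; exact Set.projIcc_of_le_left _ (by simp)
  have hor : ∀ t, T t = 0 ∨ τ t = 1 := by
    intro t
    rcases le_total (t : ℝ) (1 / 2) with h | h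
    · left; exact Set.projIcc_of_le_left _ (by linarith)
    · right; exact Set.projIcc_of_right_le _ (by linarith)
  obtain ⟨⟨t, s⟩, hz⟩ := cubeQ_essential hk
    (fun z => P (Real.cos ((τ z.1 : ℝ) * φ (T z.1, z.2)) • a (T z.1, z.2)
      + Real.sin ((τ z.1 : ℝ) * φ (T z.1, z.2)) • b (T z.1, z.2))) (by fun_prop)
    (by intro s; simp [hτ0, hT0, h0])
    (by intro s s'; simp only [hT1]; rw [hφ1 s s', h1a s s', h1b s s'])
    (by intro t s hs s' hs'; simp only; rw [hφS _ s hs s' hs', hSa _ s hs s' hs', hSb _ s hs s' hs'])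
  simp only at hz
  obtain ⟨j, hj⟩ := hφm (T t, s)
  have hβ := hP _ hz j
  obtain ⟨ρ, hρ, h1, h2⟩ := hθp j (T t, s)
  rw [map_add, map_smul, map_smul, h1, h2, hj, smul_eq_mul, smul_eq_mul] at hβ
  have hcos : ρ * Real.cos (θ j (T t, s) - (τ t : ℝ) * θ j (T t, s)) = 0 := by
    rw [Real.cos_sub]; linarith
  have hc0 : 0 < Real.cos (θ j (T t, s) - (τ t : ℝ) * θ j (T t, s)) := by
    rcases hor t with h | h
    · have hlo := (hθ0 j s).1
      have hhi := hφ0 s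
      rw [h] at hj ⊢
      rw [hj] at hhi
      have h3 := (τ t).2.1
      have h4 := (τ t).2.2
      apply Real.cos_pos_of_mem_Ioo
      constructor <;> nlinarith [Real.pi_pos]
    · rw [h]; simp
  nlinarith

end CorePart

section MainPart
open Set Filter
open scoped unitInterval Topology

lemma cLin_cplx_aux {ℓ : ℕ} (α : Vsp ℓ →ₗ[ℝ] ℝ) (x v : Vsp ℓ) :
    cLin α (cplx x v) = (α x : ℂ) + Complex.I * (α v : ℂ) := by
  have h1 : (WithLp.toLp 2 (fun j => (cplx x v j).re) : Vsp ℓ) = x := by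
    ext j; simp [cplx]
  have h2 : (WithLp.toLp 2 (fun j => (cplx x v j).im) : Vsp ℓ) = v := by
    ext j; simp [cplx]
  rw [cLin, h1, h2]

lemma cplx_re_aux {ℓ : ℕ} (x v : Vsp ℓ) :
    (WithLp.toLp 2 (fun j => (cplx x v j).re) : Vsp ℓ) = x := by
  ext j; simp [cplx]

lemma cplx_im_aux {ℓ : ℕ} (x v : Vsp ℓ) :
    (WithLp.toLp 2 (fun j => (cplx x v j).im) : Vsp ℓ) = v := by
  ext j; simp [cplx]

lemma complex_ne_aux {a b : ℝ} (h : a = 0 → b ≠ 0) : (a : ℂ) + Complex.I * (b : ℂ) ≠ 0 := by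
  intro h0
  have h1 := congrArg Complex.re h0
  have h2 := congrArg Complex.im h0
  simp at h1 h2
  exact h h1 h2

lemma ne_complex_aux {a b : ℝ} (h : (a : ℂ) + Complex.I * (b : ℂ) ≠ 0) : a = 0 → b ≠ 0 := by
  rintro rfl rfl
  simp at h

lemma mem_interKer_aux {ℓ n : ℕ} {α : Fin n → (Vsp ℓ →ₗ[ℝ] ℝ)} {J : Finset (Fin n)} {x : Vsp ℓ} :
    x ∈ interKer α J ↔ ∀ j ∈ J, α j x = 0 := by
  simp [interKer]

theorem key_step (ℓ n : ℕ) (α : Fin n → (Vsp ℓ →ₗ[ℝ] ℝ)) (ε : Fin n → ℝ)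
    (hε : ∀ i, ε i = 1 ∨ ε i = -1) (J0 : Finset (Fin n))
    (k : ℕ) (hk : 2 ≤ k) (hr : ℓ - Module.finrank ℝ (interKer α J0) = k + 1)
    (hlow : ∀ J : Finset (Fin n), ℓ - Module.finrank ℝ (interKer α J) < k + 1 → ConsistentAt α ε J)
    (haspherical : ∀ x₀ : MA α, Subsingleton (HomotopyGroup.Pi k (MA α) x₀)) :
    ConsistentAt α ε J0 := by
  classical
  by_contra hcon
  have hεne : ∀ i, ε i ≠ 0 := fun i => by rcases hε i with h | h <;> rw [h] <;> norm_num
  set X := interKer α J0 with hX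
  have hαc : ∀ j, Continuous (α j) := fun j => LinearMap.continuous_of_finiteDimensional _
  let ι := {j : Fin n // X ≤ LinearMap.ker (α j)}
  have hfX : Module.finrank ℝ X + Module.finrank ℝ Xᗮ = ℓ := by
    rw [Submodule.finrank_add_finrank_orthogonal]; simp
  have hfW : Module.finrank ℝ ((Fin k → ℝ) × ℝ) = Module.finrank ℝ Xᗮ := by
    simp; omega
  let L : ((Fin k → ℝ) × ℝ) ≃L[ℝ] Xᗮ := ContinuousLinearEquiv.ofFinrankEq hfW
  have hLne : ∀ u, u ≠ 0 → (L u : Vsp ℓ) ∉ X := by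
    intro u hu hmem
    have h1 : (L u : Vsp ℓ) ∈ X ⊓ Xᗮ := ⟨hmem, (L u).2⟩
    rw [Submodule.inf_orthogonal_eq_bot, Submodule.mem_bot] at h1
    exact hu (L.map_eq_zero_iff.1 (Subtype.ext h1))
  have hLc : Continuous fun u => (L u : Vsp ℓ) := by fun_prop
  have : Nonempty ι := by
    rcases J0.eq_empty_or_nonempty with h | ⟨j, hj⟩
    · exfalso
      have : X = ⊤ := by rw [hX, h]; simp [interKer]
      rw [this] at hr
      simp at hr
    · exact ⟨⟨j, fun x hx => mem_interKer_aux.1 hx j hj⟩⟩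
  -- the vector field
  obtain ⟨v, hv⟩ : ∃ v : C({u : (Fin k → ℝ) × ℝ // u ≠ 0}, Vsp ℓ), ∀ u,
      v u ∈ {w : Vsp ℓ | ∀ j : ι, α j (L u.1 : Vsp ℓ) = 0 → 0 < ε j * α j w} := by
    apply exists_continuous_forall_mem_convex_of_local_const
    · intro u
      intro w hw w' hw' a b ha hb hab j hj
      have h1 := hw j hj
      have h2 := hw' j hj
      rw [map_add, map_smul, map_smul, smul_eq_mul, smul_eq_mul]
      have h3 : ε j * (a * α j w + b * α j w') = a * (ε j * α j w) + b * (ε j * α j w') := by ring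
      rw [h3]
      rcases ha.eq_or_lt with h | h
      · have : b = 1 := by linarith
        rw [← h, this]; linarith
      · have := mul_pos h h1
        have := mul_nonneg hb h2.le
        linarith
    · intro u
      let J : Finset (Fin n) := Finset.univ.filter
        (fun j => X ≤ LinearMap.ker (α j) ∧ α j (L u.1 : Vsp ℓ) = 0)
      have hXJ : X < interKer α J := by
        refine lt_of_le_of_ne ?_ ?_
        · intro x hx
          rw [mem_interKer_aux]
          intro j hj
          exact (Finset.mem_filter.1 hj).2.1 hx
        · intro heq
          apply hLne u.1 u.2
          refine heq.ge ?_
          rw [mem_interKer_aux]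
          intro j hj
          exact (Finset.mem_filter.1 hj).2.2
      have h1 := Submodule.finrank_lt_finrank_of_lt hXJ
      have h2 : Module.finrank ℝ (interKer α J) ≤ ℓ := by
        simpa using Submodule.finrank_le (interKer α J)
      obtain ⟨w, hw⟩ := hlow J (by omega)
      refine ⟨w, ?_⟩
      have hev : ∀ᶠ y in 𝓝 u, ∀ j : ι, α j (L u.1 : Vsp ℓ) ≠ 0 → α j (L y.1 : Vsp ℓ) ≠ 0 := by
        rw [eventually_all]
        intro j
        by_cases hj : α j (L u.1 : Vsp ℓ) = 0
        · exact Eventually.of_forall fun y h => absurd hj h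
        · have hc : Continuous fun y : {u : (Fin k → ℝ) × ℝ // u ≠ 0} => α j (L y.1 : Vsp ℓ) :=
            (hαc j).comp (hLc.comp continuous_subtype_val)
          filter_upwards [hc.continuousAt.eventually_ne hj] with y hy _ using hy
      filter_upwards [hev] with y hy j hj
      apply hw
      intro x hx
      refine mem_interKer_aux.1 hx j (Finset.mem_filter.2 ⟨Finset.mem_univ _, j.2, ?_⟩)
      by_contra h
      exact hy j h hj
  -- the base point
  obtain ⟨p, hpX, hp⟩ := Module.Dual.exists_forall_mem_ne_zero_of_forall_exists X
    (fun j : {j : Fin n // ¬ X ≤ LinearMap.ker (α j)} => α j) (by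
      rintro ⟨j, hj⟩
      obtain ⟨x, hx, hx'⟩ := SetLike.not_le_iff_exists.1 hj
      exact ⟨x, hx, hx'⟩)
  let x : (Fin k → I) → Vsp ℓ := fun s => (L (cubeQ s) : Vsp ℓ)
  let y : (Fin k → I) → Vsp ℓ := fun s => v ⟨cubeQ s, cubeQ_ne_zero s⟩
  have hxc : Continuous x := hLc.comp cubeQ_continuous
  have hyc : Continuous y := v.continuous.comp (cubeQ_continuous.subtype_mk _)
  have hxy : ∀ s (j : ι), α j (x s) = 0 → 0 < ε j * α j (y s) := fun s j =>
    hv ⟨cubeQ s, cubeQ_ne_zero s⟩ j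
  have hxb : ∀ s ∈ Cube.boundary (Fin k), ∀ s' ∈ Cube.boundary (Fin k), x s = x s' := by
    intro s hs s' hs'
    simp only [x]; rw [cubeQ_boundary s hs, cubeQ_boundary s' hs']
  have hyb : ∀ s ∈ Cube.boundary (Fin k), ∀ s' ∈ Cube.boundary (Fin k), y s = y s' := by
    intro s hs s' hs'
    simp only [y]; congr 2; rw [cubeQ_boundary s hs, cubeQ_boundary s' hs']
  obtain ⟨δ, hδ, hδ0⟩ : ∃ δ : ℝ, (∀ j : {j : Fin n // ¬ X ≤ LinearMap.ker (α j)},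
      ∀ s, α j (p + δ • x s) ≠ 0) ∧ 0 < δ := by
    have hev : ∀ᶠ δ : ℝ in 𝓝[>] 0, ∀ j : {j : Fin n // ¬ X ≤ LinearMap.ker (α j)},
        ∀ s, α j (p + δ • x s) ≠ 0 := by
      rw [eventually_all]
      intro j
      obtain ⟨C, hC⟩ : ∃ C, ∀ s, |α j (x s)| ≤ C := by
        have hc : Continuous fun s => |α j (x s)| := ((hαc j).comp hxc).abs
        obtain ⟨C, hC⟩ := (isCompact_range hc).bddAbove
        exact ⟨C, fun s => hC ⟨s, rfl⟩⟩
      have hpj : 0 < |α j p| := abs_pos.2 (hp j)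
      have ht : ∀ᶠ δ : ℝ in 𝓝 0, δ * C < |α j p| := by
        have hc : Continuous fun δ : ℝ => δ * C := by fun_prop
        have := hc.tendsto 0
        rw [zero_mul] at this
        exact this.eventually_lt_const hpj
      filter_upwards [ht.filter_mono nhdsWithin_le_nhds, self_mem_nhdsWithin] with δ h1 h2 s h3
      rw [map_add, map_smul, smul_eq_mul] at h3
      have h4 : |α j p| = δ * |α j (x s)| := by
        rw [← abs_of_pos (show (0 : ℝ) < δ from h2), ← abs_mul, ← abs_neg (α j p)]
        congr 1
        linarith
      have h5 := mul_le_mul_of_nonneg_left (hC s) (le_of_lt (show (0 : ℝ) < δ from h2))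
      linarith
    exact (hev.and self_mem_nhdsWithin).exists
  have hpι : ∀ j : ι, α j p = 0 := fun j => j.2 hpX
  have hMA : ∀ s, cplx (p + δ • x s) (δ • y s) ∈ MA α := by
    intro s j
    rw [cLin_cplx_aux]
    apply complex_ne_aux
    by_cases hj : X ≤ LinearMap.ker (α j)
    · intro h
      rw [map_add, hpι ⟨j, hj⟩, zero_add, map_smul, smul_eq_mul] at h
      have h1 : α j (x s) = 0 := (mul_eq_zero.1 h).resolve_left hδ0.ne'
      have h2 := hxy s ⟨j, hj⟩ h1
      rw [map_smul, smul_eq_mul]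
      intro h3
      have h4 := (mul_eq_zero.1 h3).resolve_left hδ0.ne'
      simp [h4] at h2
    · intro h
      exact absurd h (hδ ⟨j, hj⟩ s)
  let f : C(Fin k → I, MA α) := ⟨fun s => ⟨cplx (p + δ • x s) (δ • y s), hMA s⟩, by
    refine Continuous.subtype_mk ?_ _
    unfold cplx
    fun_prop⟩
  let s0 : Fin k → I := fun _ => 0
  have hs0 : s0 ∈ Cube.boundary (Fin k) := ⟨⟨0, by omega⟩, Or.inl rfl⟩
  let fl : GenLoop (Fin k) (MA α) (f s0) := ⟨f, fun s hs => Subtype.ext (by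
    simp only [f, ContinuousMap.coe_mk]
    rw [hxb s hs s0 hs0, hyb s hs s0 hs0])⟩
  have hhom : GenLoop.Homotopic fl GenLoop.const := by
    have : (Quotient.mk _ fl : HomotopyGroup.Pi k (MA α) (f s0)) = Quotient.mk _ GenLoop.const :=
      (haspherical (f s0)).elim _ _
    exact Quotient.exact this
  obtain ⟨H⟩ := hhom
  have hH0 : ∀ s, H (0, s) = f s := fun s => H.apply_zero s
  have hH1 : ∀ s, H (1, s) = f s0 := fun s => H.apply_one s
  have hHb : ∀ t, ∀ s ∈ Cube.boundary (Fin k), H (t, s) = f s := fun t s hs => H.eq_fst t hs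
  have hfb : ∀ s ∈ Cube.boundary (Fin k), f s = f s0 := fun s hs => fl.2 s hs
  let a : I × (Fin k → I) → Vsp ℓ := fun z => WithLp.toLp 2 (fun j => ((H z).1 j).re)
  let b : I × (Fin k → I) → Vsp ℓ := fun z => WithLp.toLp 2 (fun j => ((H z).1 j).im)
  have hHc : Continuous fun z => (H z).1 := continuous_subtype_val.comp H.continuous
  have hac : Continuous a :=
    (PiLp.continuous_toLp 2 _).comp
      (continuous_pi fun j => Complex.continuous_re.comp ((continuous_apply j).comp hHc))
  have hbc : Continuous b :=
    (PiLp.continuous_toLp 2 _).comp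
      (continuous_pi fun j => Complex.continuous_im.comp ((continuous_apply j).comp hHc))
  have ha0 : ∀ s, a (0, s) = p + δ • x s := fun s => by
    simp only [a]; rw [hH0]; exact cplx_re_aux _ _
  have hb0 : ∀ s, b (0, s) = δ • y s := fun s => by
    simp only [b]; rw [hH0]; exact cplx_im_aux _ _
  let P0 : Vsp ℓ →L[ℝ] (Fin k → ℝ) × ℝ :=
    (L.symm : Xᗮ →L[ℝ] (Fin k → ℝ) × ℝ).comp Xᗮ.orthogonalProjectionOnto
  have hP0 : ∀ u, P0 u = 0 ↔ u ∈ X := by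
    intro u
    simp only [P0, ContinuousLinearMap.comp_apply, ContinuousLinearEquiv.coe_coe,
      ContinuousLinearEquiv.map_eq_zero_iff]
    rw [Submodule.orthogonalProjectionOnto_eq_zero_iff, Submodule.orthogonal_orthogonal]
  have hP0x : ∀ s, P0 (x s) = cubeQ s := by
    intro s
    simp [P0, x]
  have hβ : ∀ (j : ι) u, ((ε j) • LinearMap.toContinuousLinearMap (α j)) u = ε j * α j u :=
    fun j u => rfl
  refine core_contra (by omega : 0 < k)
    (fun j : ι => (ε j) • LinearMap.toContinuousLinearMap (α j)) (δ⁻¹ • P0) ?_ a b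
    hac hbc ?_ ?_ ?_ ?_ ?_ ?_ ?_ ?_
  · intro u hu j
    rw [hβ]
    have : P0 u = 0 := by
      have h := hu
      rw [smul_apply] at h
      exact (smul_eq_zero.1 h).resolve_left (inv_ne_zero hδ0.ne')
    have h2 : α j u = 0 := j.2 ((hP0 u).1 this)
    rw [h2, mul_zero]
  · intro z j h
    rw [hβ] at h ⊢
    have h1 := (mul_eq_zero.1 h).resolve_left (hεne j)
    exact mul_ne_zero (hεne j) (ne_complex_aux ((H z).2 j) h1)
  · intro s
    rw [ha0, smul_apply, map_add, (hP0 p).2 hpX, zero_add, map_smul, hP0x,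
      smul_smul, inv_mul_cancel₀ hδ0.ne', one_smul]
  · intro s j h
    rw [hβ, ha0, map_add, hpι, zero_add, map_smul, smul_eq_mul] at h
    rw [hβ, hb0, map_smul, smul_eq_mul]
    have h1 := (mul_eq_zero.1 ((mul_eq_zero.1 h).resolve_left (hεne j))).resolve_left hδ0.ne'
    have := mul_pos hδ0 (hxy s j h1)
    linarith
  · intro s
    by_contra hall
    push Not at hall
    apply hcon
    have hall' : ∀ j : ι, ε j * α j (x s) ≤ 0 := by
      intro j
      have h := hall j
      rw [hβ, ha0, map_add, hpι, zero_add, map_smul, smul_eq_mul] at h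
      have h3 : δ * (ε j * α j (x s)) ≤ δ * 0 := by linarith
      exact le_of_mul_le_mul_left h3 hδ0
    have hev : ∀ᶠ η : ℝ in 𝓝[>] 0, ∀ j : ι, 0 < ε j * α j (-x s + η • y s) := by
      rw [eventually_all]
      intro j
      rcases (hall' j).eq_or_lt with h | h
      · have h1 := hxy s j ((mul_eq_zero.1 h).resolve_left (hεne j))
        filter_upwards [self_mem_nhdsWithin] with η hη
        rw [map_add, map_neg, map_smul, smul_eq_mul]
        have := mul_pos (show (0 : ℝ) < η from hη) h1
        linarith
      · have hc : Continuous fun η : ℝ => ε j * α j (-x s + η • y s) :=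
          continuous_const.mul ((hαc j).comp (by fun_prop))
        have h2 : 0 < ε j * α j (-x s + (0 : ℝ) • y s) := by
          rw [zero_smul, add_zero, map_neg]; linarith
        exact ((hc.tendsto 0).eventually_const_lt h2).filter_mono nhdsWithin_le_nhds
    obtain ⟨η, hη⟩ := hev.exists
    exact ⟨-x s + η • y s, fun j hj => hη ⟨j, hj⟩⟩
  · intro t s hs s' hs'
    simp only [a]; rw [hHb t s hs, hHb t s' hs', hfb s hs, hfb s' hs']
  · intro t s hs s' hs'
    simp only [b]; rw [hHb t s hs, hHb t s' hs', hfb s hs, hfb s' hs']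
  · intro s s'
    simp only [a]; rw [hH1, hH1]
  · intro s s'
    simp only [b]; rw [hH1, hH1]

end MainPart

/-- If the complexified complement is aspherical (a `K(π,1)` space), then the
consistency filtration has no gap: `Σ_2 = Σ_3 = ⋯ = Σ_ℓ`. -/
theorem aspherical_implies_no_gap (ℓ n : ℕ)
    (α : Fin n → (Vsp ℓ →ₗ[ℝ] ℝ))
    (hα : ∀ i, α i ≠ 0)
    (hess : (⋂ i, (LinearMap.ker (α i) : Set (Vsp ℓ))) = {0})
    (haspherical : ∀ k : ℕ, 2 ≤ k → ∀ x₀ : MA α,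
      Subsingleton (HomotopyGroup.Pi k (MA α) x₀)) :
    ∀ m : ℕ, 2 ≤ m → m ≤ ℓ → SigmaFilt ℓ α m = SigmaFilt ℓ α 2 := by
  intro m hm _
  ext ε
  constructor
  · intro h
    exact ⟨h.1, fun J hJ => h.2 J (hJ.trans hm)⟩
  · intro h
    refine ⟨h.1, fun J _ => ?_⟩
    have hind : ∀ r : ℕ, ∀ J : Finset (Fin n), ℓ - Module.finrank ℝ (interKer α J) = r →
        ConsistentAt α ε J := by
      intro r
      induction r using Nat.strong_induction_on with
      | _ r ih =>
        intro J hJ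
        by_cases hr : r ≤ 2
        · exact h.2 J (hJ.le.trans hr)
        · obtain ⟨k, rfl⟩ : ∃ k, r = k + 1 := ⟨r - 1, by omega⟩
          exact key_step ℓ n α ε h.1 J k (by omega) hJ (fun J' hJ' => ih _ hJ' J' rfl)
            (haspherical k (by omega))
    exact hind _ J rfl
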